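/- Let A ∈ ℝ^{n×n} be such that every complex eigenvalue λ of A satisfies |λ| < 1 (A is Schur stable). Then there exist an integer m ≥ n, a real matrix P ∈ ℝ^{m×n} of full column rank (rank(P) = n), and a real matrix Q ∈ ℝ^{m×m} such that P·A = Q·P and ‖Q‖_∞ < 1. -/

import Mathlib

open Matrix Finset

/-- Logarithmic norm induced by the vector ∞-norm: `μ_∞(Q) = max_i (Q i i + ∑_{j≠i} |Q i j|)`. -/
noncomputable def muInf {m : ℕ} (Q : Matrix (Fin m) (Fin m) ℝ) : ℝ :=
  ⨆ i, (Q i i + ∑ j ∈ Finset.univ.filter (fun j => j ≠ i), |Q i j|)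

/-- Induced matrix ∞-norm: `‖Q‖_∞ = max_i ∑_j |Q i j|`. -/
noncomputable def normInf {m p : ℕ} (Q : Matrix (Fin m) (Fin p) ℝ) : ℝ :=
  ⨆ i, ∑ j, |Q i j|

/-- Vector ∞-norm: `‖v‖_∞ = max_i |v i|`. -/
noncomputable def vecNormInf {m : ℕ} (v : Fin m → ℝ) : ℝ := ⨆ i, |v i|

/-- Metzlerization `Q^m`: keep the diagonal, take absolute values off-diagonal. -/
def metzlerize {m : ℕ} (Q : Matrix (Fin m) (Fin m) ℝ) : Matrix (Fin m) (Fin m) ℝ :=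
  Matrix.of fun i j => if i = j then Q i j else |Q i j|

/-- Entrywise absolute value `|M|`. -/
def matAbs {p q : ℕ} (M : Matrix (Fin p) (Fin q) ℝ) : Matrix (Fin p) (Fin q) ℝ :=
  Matrix.of fun i j => |M i j|

/-- Entrywise positive part `M⁺`. -/
def matPos {p q : ℕ} (M : Matrix (Fin p) (Fin q) ℝ) : Matrix (Fin p) (Fin q) ℝ :=
  Matrix.of fun i j => max (M i j) 0

/-- Entrywise negative part `M⁻ := M⁺ − M`. -/
def matNeg {p q : ℕ} (M : Matrix (Fin p) (Fin q) ℝ) : Matrix (Fin p) (Fin q) ℝ :=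
  matPos M - M

/-- `Q↑ := Q^d + (Q^{nd})⁺` (diagonal plus positive part of the off-diagonal). -/
def matUp {m : ℕ} (Q : Matrix (Fin m) (Fin m) ℝ) : Matrix (Fin m) (Fin m) ℝ :=
  Matrix.of fun i j => if i = j then Q i j else max (Q i j) 0

/-- `Q↓ := (Q^{nd})⁻` (negative part of the off-diagonal). -/
def matDown {m : ℕ} (Q : Matrix (Fin m) (Fin m) ℝ) : Matrix (Fin m) (Fin m) ℝ :=
  Matrix.of fun i j => if i = j then 0 else max (Q i j) 0 - Q i j

/-!
Choose `s` strictly between the spectral radius of `A` and the required bound on `‖Q‖_∞`, and put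
`B = s⁻¹ A`. By Gelfand's formula some power `B ^ (M + 1)` has ∞-norm at most `1`. Stack
`1, B, …, B ^ M` into a tall matrix `P`: multiplying by `B` turns every block into the next one, and
the last block into `B ^ (M + 1) * 1`. Hence `P B = C P`, where the block companion matrix `C` has
at most one nonzero block in each block row, `1` or `B ^ (M + 1)`, so that `‖C‖_∞ ≤ 1`. Then
`P A = (s C) P` with `‖s C‖_∞ ≤ s`, and `P` has full column rank because one of its blocks is `1`.
-/

open Filter
open scoped NNReal Matrix.Norms.Operator

section Blocks

variable {κ κ' l m n R : Type*}

/-- The block column with blocks `X k`: the matrices `X k` stacked on top of each other. A row is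
indexed by its block `k` and its position inside that block. -/
def blockCol (X : κ → Matrix l n R) : Matrix (κ × l) n R :=
  Matrix.of fun p => X p.1 p.2

/-- The block matrix whose block row `k` is zero except for the block `D k` in block column `σ k`.
For `σ` the cyclic shift this is the block form of a companion matrix. -/
def blockMonomial [Zero R] [DecidableEq κ'] (σ : κ → κ') (D : κ → Matrix l m R) :
    Matrix (κ × l) (κ' × m) R :=
  Matrix.of fun p q => if q.1 = σ p.1 then D p.1 p.2 q.2 else 0

theorem blockCol_mul [NonUnitalNonAssocSemiring R] [Fintype m] (X : κ → Matrix l m R)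
    (A : Matrix m n R) : blockCol X * A = blockCol fun k => X k * A :=
  rfl

theorem blockMonomial_mul_blockCol [NonUnitalNonAssocSemiring R] [Fintype κ'] [DecidableEq κ']
    [Fintype m] (σ : κ → κ') (D : κ → Matrix l m R) (X : κ' → Matrix m n R) :
    blockMonomial σ D * blockCol X = blockCol fun k => D k * X (σ k) := by
  ext p j
  simp [blockMonomial, blockCol, Matrix.mul_apply, Fintype.sum_prod_type_right]

theorem rank_blockCol_of_eq_one [CommSemiring R] [StrongRankCondition R] [Fintype n]
    [DecidableEq n] {X : κ → Matrix n n R} {k : κ} (hk : X k = 1) :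
    (blockCol X).rank = Fintype.card n := by
  refine le_antisymm (Matrix.rank_le_card_width _) ?_
  calc
    Fintype.card n = ((blockCol X).submatrix (Prod.mk k) id).rank := by
      rw [← Matrix.rank_one (R := R) (n := n), ← hk]; rfl
    _ ≤ (blockCol X).rank := Matrix.rank_submatrix_le _ _ _

theorem linfty_opNNNorm_blockMonomial [SeminormedAddCommGroup R] [Fintype κ] [Fintype κ']
    [DecidableEq κ'] [Fintype l] [Fintype m] (σ : κ → κ') (D : κ → Matrix l m R) :
    ‖blockMonomial σ D‖₊ = univ.sup fun k => ‖D k‖₊ := by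
  have row_sum (p : κ × l) : ∑ q, ‖blockMonomial σ D p q‖₊ = ∑ j, ‖D p.1 p.2 j‖₊ := by
    simp [blockMonomial, Fintype.sum_prod_type_right, apply_ite (‖·‖₊)]
  simp only [Matrix.linfty_opNNNorm_def, row_sum]
  rw [← univ_product_univ, sup_product_left]

end Blocks

section LinftyOpNorm

variable {l m n o α β : Type*} [Fintype l] [Fintype m] [Fintype n] [Fintype o]

theorem normInf_eq_linfty_opNorm {m p : ℕ} (Q : Matrix (Fin m) (Fin p) ℝ) : normInf Q = ‖Q‖ := by
  rw [Matrix.linfty_opNorm_def, sup_univ_eq_ciSup, NNReal.coe_iSup]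
  simp [normInf]

theorem linfty_opNNNorm_map_eq [SeminormedAddCommGroup α] [SeminormedAddCommGroup β]
    (A : Matrix m n α) {f : α → β} (hf : ∀ a, ‖f a‖₊ = ‖a‖₊) : ‖A.map f‖₊ = ‖A‖₊ := by
  simp [Matrix.linfty_opNNNorm_def, hf]

theorem linfty_opNNNorm_submatrix_equiv [SeminormedAddCommGroup α] (A : Matrix m n α)
    (e : l ≃ m) (f : o ≃ n) : ‖A.submatrix e f‖₊ = ‖A‖₊ := by
  have row_sum (i : l) : ∑ j, ‖A.submatrix e f i j‖₊ = ∑ j, ‖A (e i) j‖₊ :=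
    f.sum_comp fun j => ‖A (e i) j‖₊
  simp only [Matrix.linfty_opNNNorm_def, sup_univ_eq_ciSup, row_sum]
  exact e.iSup_comp (g := fun i => ∑ j, ‖A i j‖₊)

theorem linfty_opNNNorm_one_le [SeminormedRing α] [NormOneClass α] [DecidableEq n] :
    ‖(1 : Matrix n n α)‖₊ ≤ 1 :=
  (Matrix.linfty_opNNNorm_diagonal _).trans_le <| (pi_nnnorm_const_le 1).trans_eq nnnorm_one

end LinftyOpNorm

section Companion

variable {n R : Type*} [Fintype n] [DecidableEq n]

/-- The block column of the powers `1, B, …, B ^ M`. -/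
def powerCol [Semiring R] (B : Matrix n n R) (M : ℕ) : Matrix (Fin (M + 1) × n) n R :=
  blockCol fun k => B ^ (k : ℕ)

/-- The block companion matrix of `X ^ (M + 1) - B ^ (M + 1)`: identity blocks on the superdiagonal
and `B ^ (M + 1)` in the lower left corner. Addition in `Fin (M + 1)` wraps around, so the block
column `k + 1` is `0` for the last `k`. -/
def powerCompanion [Semiring R] (B : Matrix n n R) (M : ℕ) :
    Matrix (Fin (M + 1) × n) (Fin (M + 1) × n) R :=
  blockMonomial (· + 1) fun k => if k = Fin.last M then B ^ (M + 1) else 1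

theorem powerCol_mul [Semiring R] (B : Matrix n n R) (M : ℕ) :
    powerCol B M * B = powerCompanion B M * powerCol B M := by
  rw [powerCol, powerCompanion, blockCol_mul, blockMonomial_mul_blockCol]
  congr 1 with k : 1
  by_cases hk : k = Fin.last M
  · simp [hk, pow_succ]
  · simp [hk, Fin.val_add_one, pow_succ]

theorem rank_powerCol [CommSemiring R] [StrongRankCondition R] (B : Matrix n n R) (M : ℕ) :
    (powerCol B M).rank = Fintype.card n :=
  rank_blockCol_of_eq_one (k := 0) (pow_zero B)

theorem linfty_opNNNorm_powerCompanion_le_one [SeminormedRing R] [NormOneClass R]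
    {B : Matrix n n R} {M : ℕ} (hB : ‖B ^ (M + 1)‖₊ ≤ 1) : ‖powerCompanion B M‖₊ ≤ 1 := by
  rw [powerCompanion, linfty_opNNNorm_blockMonomial]
  refine Finset.sup_le fun k _ => ?_
  split_ifs
  exacts [hB, linfty_opNNNorm_one_le]

theorem exists_mul_eq_mul_norm_le {𝕜 : Type*} [NormedField 𝕜] {A : Matrix n n 𝕜} {c : 𝕜}
    (hc : c ≠ 0) {M : ℕ} (hA : ‖A ^ (M + 1)‖ ≤ ‖c‖ ^ (M + 1)) :
    ∃ (P : Matrix (Fin (M + 1) × n) n 𝕜) (Q : Matrix (Fin (M + 1) × n) (Fin (M + 1) × n) 𝕜),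
      P.rank = Fintype.card n ∧ P * A = Q * P ∧ ‖Q‖ ≤ ‖c‖ := by
  obtain ⟨B, rfl⟩ : ∃ B, A = c • B := ⟨c⁻¹ • A, (smul_inv_smul₀ hc A).symm⟩
  have hB : ‖B ^ (M + 1)‖ ≤ 1 := by
    rw [smul_pow, norm_smul, norm_pow] at hA
    exact (mul_le_iff_le_one_right (pow_pos (norm_pos_iff.2 hc) (M + 1))).1 hA
  refine ⟨powerCol B M, c • powerCompanion B M, rank_powerCol B M, ?_, ?_⟩
  · rw [Matrix.mul_smul, powerCol_mul, Matrix.smul_mul]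
  · rw [norm_smul]
    exact mul_le_of_le_one_right (norm_nonneg c) (linfty_opNNNorm_powerCompanion_le_one hB)

end Companion

section Spectrum

variable {𝔸 : Type*} [NormedRing 𝔸] [NormedAlgebra ℂ 𝔸] [CompleteSpace 𝔸]

theorem spectralRadius_lt_of_forall_nnnorm_lt (a : 𝔸) {r : ℝ≥0} (hr : 0 < r)
    (ha : ∀ z ∈ spectrum ℂ a, ‖z‖₊ < r) : spectralRadius ℂ a < r := by
  cases subsingleton_or_nontrivial 𝔸
  · simpa [Subsingleton.elim a 0] using hr
  · exact spectrum.spectralRadius_lt_of_forall_lt a ha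

theorem eventually_nnnorm_pow_lt_of_spectralRadius_lt {a : 𝔸} {r : ℝ≥0}
    (h : spectralRadius ℂ a < r) : ∀ᶠ k : ℕ in atTop, ‖a ^ k‖₊ < r ^ k := by
  have gelfand := spectrum.pow_nnnorm_pow_one_div_tendsto_nhds_spectralRadius a
  filter_upwards [gelfand.eventually_lt_const h, eventually_gt_atTop 0] with k hk hk_pos
  rw [one_div, ENNReal.rpow_inv_lt_iff (by positivity), ENNReal.rpow_natCast] at hk
  exact_mod_cast hk

theorem exists_norm_pow_succ_lt_of_spectrum_lt {n 𝕜 : Type*} [Fintype n] [DecidableEq n]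
    [NormedField 𝕜] [NormedAlgebra 𝕜 ℂ] (A : Matrix n n 𝕜) {r : ℝ} (hr : 0 < r)
    (hA : ∀ z ∈ spectrum ℂ (A.map (algebraMap 𝕜 ℂ)), ‖z‖ < r) :
    ∃ s : ℝ, 0 < s ∧ s < r ∧ ∃ M : ℕ, ‖A ^ (M + 1)‖ < s ^ (M + 1) := by
  lift r to ℝ≥0 using hr.le
  have : CompleteSpace (Matrix n n ℂ) := FiniteDimensional.complete ℂ _
  obtain ⟨s, hs, hsr⟩ := ENNReal.lt_iff_exists_nnreal_btwn.1
    (spectralRadius_lt_of_forall_nnnorm_lt _ hr hA)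
  obtain ⟨M, hM⟩ := ((tendsto_add_atTop_nat 1).eventually
    (eventually_nnnorm_pow_lt_of_spectralRadius_lt hs)).exists
  refine ⟨s, ENNReal.coe_pos.1 (pos_of_gt hs), ENNReal.coe_lt_coe.1 hsr, M, ?_⟩
  rw [← Matrix.map_pow, linfty_opNNNorm_map_eq _ fun x => nnnorm_algebraMap' ℂ x] at hM
  exact_mod_cast hM

end Spectrum

theorem polyhedral_lyapunov_of_schur_general {n : Type*} [Fintype n] [DecidableEq n]
    (A : Matrix n n ℝ) {r : ℝ} (hr : 0 < r)
    (hA : ∀ z ∈ spectrum ℂ (A.map (algebraMap ℝ ℂ)), ‖z‖ < r) :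
    ∃ (m : ℕ) (P : Matrix (Fin m) n ℝ) (Q : Matrix (Fin m) (Fin m) ℝ),
      Fintype.card n ≤ m ∧ P.rank = Fintype.card n ∧ P * A = Q * P ∧ normInf Q < r := by
  obtain ⟨s, hs, hsr, M, hM⟩ := exists_norm_pow_succ_lt_of_spectrum_lt A hr hA
  obtain ⟨P, Q, hP, hPA, hQ⟩ := exists_mul_eq_mul_norm_le (c := s) hs.ne'
    (by rw [Real.norm_of_nonneg hs.le]; exact hM.le)
  let e := (Fintype.equivFin (Fin (M + 1) × n)).symm
  have rank_eq : (P.submatrix e id).rank = Fintype.card n :=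
    (Matrix.rank_submatrix P e (Equiv.refl n)).trans hP
  refine ⟨_, P.submatrix e id, Q.submatrix e e, ?_, rank_eq, ?_, ?_⟩
  · simpa [rank_eq] using (P.submatrix e id).rank_le_card_height
  · rw [Matrix.submatrix_mul_equiv, ← hPA]
    rfl
  · calc
      normInf (Q.submatrix e e) = ‖Q‖ :=
        (normInf_eq_linfty_opNorm _).trans <|
          congr_arg NNReal.toReal (linfty_opNNNorm_submatrix_equiv Q e e)
      _ ≤ s := hQ.trans_eq (Real.norm_of_nonneg hs.le)
      _ < r := hsr

/-- every Schur stable real matrix admits a full-column-rank `P` (possibly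
lifted, `m ≥ n`) and `Q` with `P A = Q P` and `‖Q‖_∞ < 1`. -/
theorem polyhedral_lyapunov_of_schur {n : ℕ} (A : Matrix (Fin n) (Fin n) ℝ)
    (hA : ∀ lam ∈ spectrum ℂ (A.map (algebraMap ℝ ℂ)), ‖lam‖ < 1) :
    ∃ (m : ℕ) (P : Matrix (Fin m) (Fin n) ℝ) (Q : Matrix (Fin m) (Fin m) ℝ),
      n ≤ m ∧ P.rank = n ∧ P * A = Q * P ∧ normInf Q < 1 := by
  simpa only [Fintype.card_fin] using polyhedral_lyapunov_of_schur_general A one_pos hA
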